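/- Fix ξ ∈ ℝ³ with ξ ≠ 0 and let W², W³ be orthonormal vectors in ℝ³ orthogonal to ξ. Define functions h₀(ξ) = (√2|ξ|²/(√(3+5|ξ|²)√(1+|ξ|²)))χ₀ - (√(3+3|ξ|²)/√(3+5|ξ|²))χ₄, h_{±1}(ξ) = (√(3/2)|ξ|/√(3+5|ξ|²))χ₀ ± √(1/2)(v·ξ/|ξ|)χ₀ + (|ξ|/√(3+5|ξ|²))χ₄, and h_k(ξ) = (v·Wᵏ)χ₀ for k = 2,3. Then (h_j(ξ), h_k(ξ))_ξ = δ_{jk} for all j, k ∈ {-1,0,1,2,3}, where (f,g)_ξ = (f,g) + |ξ|^{-2}(P_d f, P_d g). -/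

import Mathlib

open MeasureTheory RealInnerProductSpace

/-- The normalized global Maxwellian on ℝ³. -/
noncomputable def Mw (v : EuclideanSpace ℝ (Fin 3)) : ℝ :=
  (2 * Real.pi) ^ (-(3 : ℝ) / 2) * Real.exp (-‖v‖ ^ 2 / 2)

noncomputable def chi0 (v : EuclideanSpace ℝ (Fin 3)) : ℝ := Real.sqrt (Mw v)

noncomputable def chi4 (v : EuclideanSpace ℝ (Fin 3)) : ℝ :=
  (‖v‖ ^ 2 - 3) * Real.sqrt (Mw v) / Real.sqrt 6

/-- The rank-one projection P_d g = (g,√M)√M. -/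
noncomputable def Pd (f : EuclideanSpace ℝ (Fin 3) → ℝ) :
    EuclideanSpace ℝ (Fin 3) → ℝ :=
  fun v => (∫ w : EuclideanSpace ℝ (Fin 3), f w * chi0 w) * chi0 v

/-- The weighted inner product (f,g)_ξ = (f,g) + |ξ|⁻²(P_d f, P_d g). -/
noncomputable def innerXi (ξ : EuclideanSpace ℝ (Fin 3))
    (f g : EuclideanSpace ℝ (Fin 3) → ℝ) : ℝ :=
  (∫ v : EuclideanSpace ℝ (Fin 3), f v * g v) +
    (‖ξ‖ ^ 2)⁻¹ * ∫ v : EuclideanSpace ℝ (Fin 3), Pd f v * Pd g v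

/-- The eigenfunctions h₋₁, h₀, h₁, h₂, h₃ of the macroscopic operator D(ξ),
    indexed in this order by `Fin 5`. -/
noncomputable def hfun (ξ W2 W3 : EuclideanSpace ℝ (Fin 3)) :
    Fin 5 → EuclideanSpace ℝ (Fin 3) → ℝ :=
  ![fun v => Real.sqrt (3 / 2) * ‖ξ‖ / Real.sqrt (3 + 5 * ‖ξ‖ ^ 2) * chi0 v -
      Real.sqrt (1 / 2) * (⟪v, ξ⟫ / ‖ξ‖) * chi0 v +
      ‖ξ‖ / Real.sqrt (3 + 5 * ‖ξ‖ ^ 2) * chi4 v,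
    fun v => Real.sqrt 2 * ‖ξ‖ ^ 2 /
        (Real.sqrt (3 + 5 * ‖ξ‖ ^ 2) * Real.sqrt (1 + ‖ξ‖ ^ 2)) * chi0 v -
      Real.sqrt (3 + 3 * ‖ξ‖ ^ 2) / Real.sqrt (3 + 5 * ‖ξ‖ ^ 2) * chi4 v,
    fun v => Real.sqrt (3 / 2) * ‖ξ‖ / Real.sqrt (3 + 5 * ‖ξ‖ ^ 2) * chi0 v +
      Real.sqrt (1 / 2) * (⟪v, ξ⟫ / ‖ξ‖) * chi0 v +
      ‖ξ‖ / Real.sqrt (3 + 5 * ‖ξ‖ ^ 2) * chi4 v,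
    fun v => ⟪v, W2⟫ * chi0 v,
    fun v => ⟪v, W3⟫ * chi0 v]

/-- One-dimensional standard Gaussian density. -/
noncomputable def gdens (x : ℝ) : ℝ := (Real.sqrt (2 * Real.pi))⁻¹ * Real.exp (-(1 / 2) * x ^ 2)

lemma gdens_integrable (n : ℕ) : Integrable (fun x : ℝ => x ^ n * gdens x) := by
  have h := integrable_rpow_mul_exp_neg_mul_sq (b := 1 / 2) (by norm_num) (s := (n : ℝ))
    (by have : (0 : ℝ) ≤ n := n.cast_nonneg
        linarith)
  have h2 := h.const_mul ((Real.sqrt (2 * Real.pi))⁻¹)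
  refine h2.congr (Filter.Eventually.of_forall fun x => ?_)
  simp only [gdens, Real.rpow_natCast]
  ring

lemma gdens_hasDerivAt (x : ℝ) : HasDerivAt gdens (-x * gdens x) x := by
  unfold gdens
  have h := (((((hasDerivAt_id x).pow 2).const_mul (-(1 / 2) : ℝ))).exp).const_mul
    ((Real.sqrt (2 * Real.pi))⁻¹)
  refine h.congr_deriv ?_
  simp
  ring

lemma gdens_zero : ∫ x : ℝ, gdens x = 1 := by
  unfold gdens
  rw [integral_const_mul, integral_gaussian]
  have : Real.pi / (1 / 2) = 2 * Real.pi := by ring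
  rw [this]
  have : Real.sqrt (2 * Real.pi) ≠ 0 := by positivity
  field_simp

lemma gdens_one : ∫ x : ℝ, x * gdens x = 0 := by
  have h := integral_eq_zero_of_hasDerivAt_of_integrable (f := gdens)
    (f' := fun x => -x * gdens x) gdens_hasDerivAt
    (by simpa using (gdens_integrable 1).neg) (by simpa using gdens_integrable 0)
  simp only [neg_mul, integral_neg] at h
  linarith

lemma gdens_rec (n : ℕ) :
    ∫ x : ℝ, x ^ (n + 2) * gdens x = (n + 1) * ∫ x : ℝ, x ^ n * gdens x := by
  have hd : ∀ x : ℝ, HasDerivAt (fun x => x ^ (n + 1) * gdens x)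
      ((n + 1) * (x ^ n * gdens x) - x ^ (n + 2) * gdens x) x := by
    intro x
    refine ((hasDerivAt_pow (n + 1) x).mul (gdens_hasDerivAt x)).congr_deriv ?_
    simp
    ring
  have h := integral_eq_zero_of_hasDerivAt_of_integrable hd
    (((gdens_integrable n).const_mul _).sub (gdens_integrable (n + 2))) (gdens_integrable (n + 1))
  rw [integral_sub ((gdens_integrable n).const_mul _) (gdens_integrable (n + 2)),
    integral_const_mul] at h
  linarith

/-- Hermite polynomials of degree at most two. -/
noncomputable def herm (k : Fin 3) (x : ℝ) : ℝ := ![1, x, x ^ 2 - 1] k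

noncomputable def hnorm (k l : Fin 3) : ℝ := if k = l then ![1, 1, 2] k else 0

lemma herm_int (k l : Fin 3) :
    Integrable (fun x : ℝ => herm k x * herm l x * gdens x) ∧
      ∫ x : ℝ, herm k x * herm l x * gdens x = hnorm k l := by
  have i0 := gdens_integrable 0
  have i1 := gdens_integrable 1
  have i2 := gdens_integrable 2
  have i3 := gdens_integrable 3
  have i4 := gdens_integrable 4
  have m0 : ∫ x : ℝ, x ^ 0 * gdens x = 1 := by simpa using gdens_zero
  have m1 : ∫ x : ℝ, x ^ 1 * gdens x = 0 := by simpa using gdens_one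
  have m2 : ∫ x : ℝ, x ^ 2 * gdens x = 1 := by rw [gdens_rec 0, m0]; norm_num
  have m3 : ∫ x : ℝ, x ^ 3 * gdens x = 0 := by rw [gdens_rec 1, m1]; norm_num
  have m4 : ∫ x : ℝ, x ^ 4 * gdens x = 3 := by rw [gdens_rec 2, m2]; norm_num
  have key : ∀ (a b c d e : ℝ) (F : ℝ → ℝ),
      (∀ x, F x = a * (x ^ 0 * gdens x) + b * (x ^ 1 * gdens x) + c * (x ^ 2 * gdens x)
        + d * (x ^ 3 * gdens x) + e * (x ^ 4 * gdens x)) →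
      Integrable F ∧ ∫ x, F x = a + c + 3 * e := by
    intro a b c d e F hF
    have hF' := funext hF
    have j0 := i0.const_mul a
    have j1 := i1.const_mul b
    have j2 := i2.const_mul c
    have j3 := i3.const_mul d
    have j4 := i4.const_mul e
    have k1 : Integrable (fun x : ℝ => a * (x ^ 0 * gdens x) + b * (x ^ 1 * gdens x)) := j0.add j1
    have k2 : Integrable (fun x : ℝ => a * (x ^ 0 * gdens x) + b * (x ^ 1 * gdens x)
      + c * (x ^ 2 * gdens x)) := k1.add j2
    have k3 : Integrable (fun x : ℝ => a * (x ^ 0 * gdens x) + b * (x ^ 1 * gdens x)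
      + c * (x ^ 2 * gdens x) + d * (x ^ 3 * gdens x)) := k2.add j3
    rw [hF']
    refine ⟨k3.add j4, ?_⟩
    rw [integral_add k3 j4, integral_add k2 j3, integral_add k1 j2, integral_add j0 j1]
    simp only [integral_const_mul, m0, m1, m2, m3, m4]
    ring
  have fin : ∀ (a b c d e : ℝ), 
      (∀ x, herm k x * herm l x * gdens x = 
        a * (x ^ 0 * gdens x) + b * (x ^ 1 * gdens x) + c * (x ^ 2 * gdens x)
        + d * (x ^ 3 * gdens x) + e * (x ^ 4 * gdens x)) → a + c + 3 * e = hnorm k l →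
      Integrable (fun x : ℝ => herm k x * herm l x * gdens x) ∧
      ∫ x : ℝ, herm k x * herm l x * gdens x = hnorm k l := by
    intro a b c d e h1 h2
    rw [← h2]
    exact key a b c d e _ h1
  fin_cases k <;> fin_cases l
  · refine fin 1 0 0 0 0 (fun x => ?_) ?_
    · simp [herm]
    · simp [hnorm]
  · refine fin 0 1 0 0 0 (fun x => ?_) ?_
    · simp [herm]
    · simp [hnorm]
  · refine fin (-1) 0 1 0 0 (fun x => ?_) ?_
    · simp [herm]; ring
    · simp [hnorm]
  · refine fin 0 1 0 0 0 (fun x => ?_) ?_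
    · simp [herm]
    · simp [hnorm]
  · refine fin 0 0 1 0 0 (fun x => ?_) ?_
    · simp [herm, pow_two]
    · simp [hnorm]
  · refine fin 0 (-1) 0 1 0 (fun x => ?_) ?_
    · simp [herm]; ring
    · simp [hnorm]
  · refine fin (-1) 0 1 0 0 (fun x => ?_) ?_
    · simp [herm]; ring
    · simp [hnorm]
  · refine fin 0 (-1) 0 1 0 (fun x => ?_) ?_
    · simp [herm]; ring
    · simp [hnorm]
  · refine fin 1 0 (-2) 0 1 (fun x => ?_) ?_
    · simp [herm]; ring
    · simp [hnorm]; norm_num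

lemma Mw_eq (v : EuclideanSpace ℝ (Fin 3)) : Mw v = ∏ i, gdens (v i) := by
  have hpi : (0 : ℝ) < 2 * Real.pi := by positivity
  have h1 : (2 * Real.pi) ^ (-(3 : ℝ) / 2) = ((Real.sqrt (2 * Real.pi))⁻¹) ^ 3 := by
    rw [Real.sqrt_eq_rpow, ← Real.rpow_neg hpi.le, ← Real.rpow_natCast, ← Real.rpow_mul hpi.le]
    norm_num
  unfold Mw gdens
  rw [h1, EuclideanSpace.norm_sq_eq, Fin.sum_univ_three, Fin.prod_univ_three]
  simp only [Real.norm_eq_abs, sq_abs]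
  have h2 : -((v 0) ^ 2 + (v 1) ^ 2 + (v 2) ^ 2) / 2 =
    -(1 / 2) * (v 0) ^ 2 + -(1 / 2) * (v 1) ^ 2 + -(1 / 2) * (v 2) ^ 2 := by ring
  rw [h2, Real.exp_add, Real.exp_add]
  ring

lemma Mw_nonneg (v : EuclideanSpace ℝ (Fin 3)) : 0 ≤ Mw v := by
  unfold Mw; positivity

lemma chi0_mul_self (v : EuclideanSpace ℝ (Fin 3)) : chi0 v * chi0 v = Mw v :=
  Real.mul_self_sqrt (Mw_nonneg v)

/-- Tensor Hermite functions. -/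
noncomputable def herm3 (k : Fin 3 → Fin 3) (v : EuclideanSpace ℝ (Fin 3)) : ℝ :=
  ∏ i, herm (k i) (v i)

lemma herm3_int (k l : Fin 3 → Fin 3) :
    Integrable (fun v => herm3 k v * herm3 l v * Mw v) ∧
      ∫ v, herm3 k v * herm3 l v * Mw v = ∏ i, hnorm (k i) (l i) := by
  have e : (fun v : EuclideanSpace ℝ (Fin 3) => herm3 k v * herm3 l v * Mw v) =
      fun v => (fun y : Fin 3 → ℝ =>
        ∏ i, (fun x : ℝ => herm (k i) x * herm (l i) x * gdens x) (y i)) (WithLp.ofLp v) := by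
    funext v
    simp only [herm3, Mw_eq, Finset.prod_mul_distrib]
  have mp := PiLp.volume_preserving_ofLp (Fin 3)
  have me : MeasurableEmbedding (@WithLp.ofLp 2 (Fin 3 → ℝ)) :=
    (MeasurableEquiv.toLp 2 (Fin 3 → ℝ)).symm.measurableEmbedding
  constructor
  · rw [e]
    exact (mp.integrable_comp_emb me).2
      (Integrable.fintype_prod (fun i => (herm_int (k i) (l i)).1))
  · rw [e]
    refine (mp.integral_comp me (fun y : Fin 3 → ℝ =>
        ∏ i, (fun x : ℝ => herm (k i) x * herm (l i) x * gdens x) (y i))).trans ?_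
    refine (integral_fintype_prod_volume_eq_prod
      (fun i (x : ℝ) => herm (k i) x * herm (l i) x * gdens x)).trans ?_
    exact Finset.prod_congr rfl fun i _ => (herm_int (k i) (l i)).2

/-- Multi-indices of the seven basis functions. -/
def multi : Fin 7 → Fin 3 → Fin 3 :=
  ![![0, 0, 0], ![1, 0, 0], ![0, 1, 0], ![0, 0, 1], ![2, 0, 0], ![0, 2, 0], ![0, 0, 2]]

/-- General macroscopic function. -/
noncomputable def mac (a : ℝ) (w : EuclideanSpace ℝ (Fin 3)) (c : ℝ)
    (v : EuclideanSpace ℝ (Fin 3)) : ℝ :=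
  (a + ⟪v, w⟫ + c * (‖v‖ ^ 2 - 3)) * chi0 v

noncomputable def coefs (a : ℝ) (w : EuclideanSpace ℝ (Fin 3)) (c : ℝ) : Fin 7 → ℝ :=
  ![a, w 0, w 1, w 2, c, c, c]

lemma mac_eq (a : ℝ) (w : EuclideanSpace ℝ (Fin 3)) (c : ℝ) (v : EuclideanSpace ℝ (Fin 3)) :
    mac a w c v = (∑ α, coefs a w c α * herm3 (multi α) v) * chi0 v := by
  unfold mac
  rw [EuclideanSpace.norm_sq_eq, PiLp.inner_apply]
  simp [Fin.sum_univ_succ, coefs, herm3, multi, herm, Fin.prod_univ_succ]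
  left
  ring

lemma mac_integral (a a' : ℝ) (w w' : EuclideanSpace ℝ (Fin 3)) (c c' : ℝ) :
    ∫ v, mac a w c v * mac a' w' c' v = a * a' + ⟪w, w'⟫ + 6 * c * c' := by
  have e : ∀ v, mac a w c v * mac a' w' c' v = ∑ α, ∑ β, (coefs a w c α * coefs a' w' c' β) *
      (herm3 (multi α) v * herm3 (multi β) v * Mw v) := by
    intro v
    rw [mac_eq, mac_eq, ← chi0_mul_self, mul_mul_mul_comm, Finset.sum_mul_sum, Finset.sum_mul]
    refine Finset.sum_congr rfl fun α _ => ?_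
    rw [Finset.sum_mul]
    refine Finset.sum_congr rfl fun β _ => ?_
    ring
  simp_rw [e]
  rw [integral_finsetSum _ fun α _ => integrable_finsetSum _ fun β _ =>
    (herm3_int (multi α) (multi β)).1.const_mul _]
  simp_rw [integral_finsetSum _ fun β _ => (herm3_int (multi _) (multi β)).1.const_mul _,
    integral_const_mul, (herm3_int _ _).2]
  rw [PiLp.inner_apply]
  simp [Fin.sum_univ_succ, coefs, multi, hnorm, Fin.prod_univ_succ]
  ring

lemma chi0_eq_mac : chi0 = mac 1 0 0 := by
  funext v
  simp [mac]

lemma innerXi_mac (ξ : EuclideanSpace ℝ (Fin 3)) (a a' : ℝ) (w w' : EuclideanSpace ℝ (Fin 3))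
    (c c' : ℝ) : innerXi ξ (mac a w c) (mac a' w' c') =
      a * a' + ⟪w, w'⟫ + 6 * c * c' + (‖ξ‖ ^ 2)⁻¹ * (a * a') := by
  have hP : ∀ (a : ℝ) (w : EuclideanSpace ℝ (Fin 3)) (c : ℝ), Pd (mac a w c) = mac a 0 0 := by
    intro a w c
    funext v
    simp only [Pd]
    rw [chi0_eq_mac, mac_integral]
    simp [mac]
  unfold innerXi
  rw [hP, hP, mac_integral, mac_integral]
  simp


/-- Orthonormality (h_j(ξ), h_k(ξ))_ξ = δ_{jk} of the eigenfunctions. -/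
theorem hfun_orthonormal (ξ W2 W3 : EuclideanSpace ℝ (Fin 3)) (hξ : ξ ≠ 0)
    (hW2 : ‖W2‖ = 1) (hW3 : ‖W3‖ = 1) (hW23 : ⟪W2, W3⟫ = 0)
    (hW2ξ : ⟪W2, ξ⟫ = 0) (hW3ξ : ⟪W3, ξ⟫ = 0) :
    ∀ j k : Fin 5, innerXi ξ (hfun ξ W2 W3 j) (hfun ξ W2 W3 k) =
      if j = k then 1 else 0 := by
  have hs : 0 < ‖ξ‖ := norm_pos_iff.2 hξ
  have hξξ : ⟪ξ, ξ⟫ = ‖ξ‖ ^ 2 := real_inner_self_eq_norm_sq ξ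
  have h22 : ⟪W2, W2⟫ = 1 := by rw [real_inner_self_eq_norm_sq, hW2]; norm_num
  have h33 : ⟪W3, W3⟫ = 1 := by rw [real_inner_self_eq_norm_sq, hW3]; norm_num
  have hW32 : ⟪W3, W2⟫ = 0 := by rw [real_inner_comm]; exact hW23
  have hξ2 : ⟪ξ, W2⟫ = 0 := by rw [real_inner_comm]; exact hW2ξ
  have hξ3 : ⟪ξ, W3⟫ = 0 := by rw [real_inner_comm]; exact hW3ξ
  generalize hsd : ‖ξ‖ = s at hs hξξ
  obtain ⟨p, hp⟩ : ∃ p, p = Real.sqrt (3 + 5 * s ^ 2) := ⟨_, rfl⟩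
  obtain ⟨q, hq⟩ : ∃ q, q = Real.sqrt (1 + s ^ 2) := ⟨_, rfl⟩
  obtain ⟨r2, hr2⟩ : ∃ r, r = Real.sqrt 2 := ⟨_, rfl⟩
  obtain ⟨r3, hr3⟩ : ∃ r, r = Real.sqrt 3 := ⟨_, rfl⟩
  have p0 : 0 < p := by rw [hp]; positivity
  have q0 : 0 < q := by rw [hq]; positivity
  have r20 : 0 < r2 := by rw [hr2]; positivity
  have r30 : 0 < r3 := by rw [hr3]; positivity
  have pp : p ^ 2 = 3 + 5 * s ^ 2 := by rw [hp]; exact Real.sq_sqrt (by positivity)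
  have qq : q ^ 2 = 1 + s ^ 2 := by rw [hq]; exact Real.sq_sqrt (by positivity)
  have rr2 : r2 ^ 2 = 2 := by rw [hr2]; exact Real.sq_sqrt (by positivity)
  have rr3 : r3 ^ 2 = 3 := by rw [hr3]; exact Real.sq_sqrt (by positivity)
  have e1 : Real.sqrt (3 + 3 * s ^ 2) = r3 * q := by
    rw [hr3, hq, ← Real.sqrt_mul (by norm_num)]; congr 1; ring
  have e2 : Real.sqrt (3 / 2) = r3 / r2 := by rw [hr3, hr2, Real.sqrt_div (by norm_num)]
  have e3 : Real.sqrt (1 / 2) = 1 / r2 := by rw [hr2, Real.sqrt_div (by norm_num)]; simp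
  have e4 : Real.sqrt 6 = r2 * r3 := by
    rw [hr3, hr2, ← Real.sqrt_mul (by norm_num)]; norm_num
  have f : ∀ j, hfun ξ W2 W3 j = mac (![r3 * s / (r2 * p), r2 * s ^ 2 / (p * q),
      r3 * s / (r2 * p), 0, 0] j) (![(-(1 / (r2 * s))) • ξ, 0, (1 / (r2 * s)) • ξ, W2, W3] j)
      (![s / (p * r2 * r3), -(q / (p * r2)), s / (p * r2 * r3), 0, 0] j) := by
    intro j
    funext v
    fin_cases j <;>
    simp [-one_div, hfun, mac, chi4, hsd, e1, e2, e3, e4, ← hp, ← hq, ← hr2, inner_smul_right] <;>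
    simp only [chi0] <;> field_simp <;> ring
  intro j k
  rw [f j, f k, innerXi_mac, hsd]
  fin_cases j <;> fin_cases k <;>
    simp [inner_smul_left, inner_smul_right, hsd, hW2, hW3, hW23, hW32, hW2ξ, hW3ξ, hξ2, hξ3,
      norm_smul, abs_of_pos hs, abs_of_pos r20]
  all_goals field_simp
  all_goals have r34 : r3 ^ 4 = 9 := by rw [show r3 ^ 4 = (r3 ^ 2) ^ 2 by ring, rr3]; norm_num
  all_goals have r24 : r2 ^ 4 = 4 := by rw [show r2 ^ 4 = (r2 ^ 2) ^ 2 by ring, rr2]; norm_num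
  all_goals have q4 : q ^ 4 = (1 + s ^ 2) ^ 2 := by rw [show q ^ 4 = (q ^ 2) ^ 2 by ring, qq]
  all_goals simp only [r34, r24, q4, rr2, rr3, pp, qq]
  all_goals ring
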